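/- arXiv:1605.08288 — 2 statements merged into one kernel-verified Lean document; each statement's English description precedes it below -/
import Mathlib

section
/- For any vertex v of a directed median graph (G,o), the principal filter F_o(v,G) is a convex set of vertices of G. -/
/-- The interval `I(u,v)` in a graph. -/
def gInterval {V : Type} (G : SimpleGraph V) (u v : V) : Set V :=
  {w | G.dist u w + G.dist w v = G.dist u v}

/-- A median graph: a connected graph in which every triple of vertices has a
unique median. -/
def IsMedianGraph {V : Type} (G : SimpleGraph V) : Prop :=
  G.Connected ∧ ∀ x y z : V, ∃! m : V,
    m ∈ gInterval G x y ∧ m ∈ gInterval G y z ∧ m ∈ gInterval G z x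

/-- A set of vertices is convex if it contains the interval between any two of its
elements. -/
def ConvexSet {V : Type} (G : SimpleGraph V) (S : Set V) : Prop :=
  ∀ u ∈ S, ∀ v ∈ S, gInterval G u v ⊆ S

/-- An orientation of the edges of a graph: each edge gets exactly one direction. -/
structure GraphOrientation {V : Type} (G : SimpleGraph V) where
  dir : V → V → Prop
  adj_of_dir : ∀ u v, dir u v → G.Adj u v
  total : ∀ u v, G.Adj u v → dir u v ∨ dir v u
  asymm : ∀ u v, dir u v → ¬ dir v u

/-- An orientation is admissible (defines a directed median graph) if opposite
edges of every 4-cycle receive the same direction. -/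
def IsAdmissible {V : Type} (G : SimpleGraph V) (o : GraphOrientation G) : Prop :=
  ∀ a b c d : V, G.Adj a b → G.Adj b c → G.Adj c d → G.Adj d a → a ≠ c → b ≠ d →
    (o.dir a b ↔ o.dir d c)

/-- The principal filter `F_o(v,G) = {x : v = x or v ≺_o x}` of a vertex `v`,
where `≺_o` is the partial order generated by the directed edges. -/
def oFilter {V : Type} {G : SimpleGraph V} (o : GraphOrientation G) (v : V) : Set V :=
  {x | Relation.ReflTransGen o.dir v x}

section aux
variable {V : Type} {G : SimpleGraph V}

theorem aux_toward (hc : G.Connected) (a m : V) (h : a ≠ m) :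
    ∃ a', G.Adj a a' ∧ G.dist a' m + 1 = G.dist a m := by
  obtain ⟨p, hp⟩ := hc.exists_walk_length_eq_dist a m
  cases p with
  | nil => exact absurd rfl h
  | cons hadj q =>
    rename_i b
    refine ⟨b, hadj, ?_⟩
    have h1 := SimpleGraph.dist_le q
    have h2 : G.dist a m ≤ G.dist a b + G.dist b m := hc.dist_triangle
    have h3 := SimpleGraph.dist_eq_one_iff_adj.2 hadj
    simp only [SimpleGraph.Walk.length_cons] at hp
    omega

theorem aux_bip (hG : IsMedianGraph G) (u x y : V) (h : G.Adj x y) :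
    G.dist u x = G.dist u y + 1 ∨ G.dist u y = G.dist u x + 1 := by
  obtain ⟨m, ⟨h1, h2, h3⟩, -⟩ := hG.2 x y u
  simp only [gInterval, Set.mem_setOf_eq] at h1 h2 h3
  have h4 := SimpleGraph.dist_eq_one_iff_adj.2 h
  rw [G.dist_comm (u := m) (v := u), G.dist_comm (u := y) (v := u)] at h2
  rw [G.dist_comm (u := m) (v := x)] at h3
  rw [G.dist_comm (u := m) (v := y)] at h1
  omega

theorem aux_quad (hG : IsMedianGraph G) (u x y z : V) (hx : G.Adj z x) (hy : G.Adj z y)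
    (hne : x ≠ y) (hdx : G.dist u x + 1 = G.dist u z) (hdy : G.dist u y + 1 = G.dist u z) :
    ∃ w, G.Adj w x ∧ G.Adj w y ∧ w ≠ z ∧ G.dist u w + 1 = G.dist u x := by
  obtain ⟨m, ⟨h1, h2, h3⟩, -⟩ := hG.2 x y u
  simp only [gInterval, Set.mem_setOf_eq] at h1 h2 h3
  have hzx := SimpleGraph.dist_eq_one_iff_adj.2 hx
  have hzy := SimpleGraph.dist_eq_one_iff_adj.2 hy
  have h5 : G.dist x y ≤ G.dist x z + G.dist z y := hG.1.dist_triangle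
  have h6 := hG.1.pos_dist_of_ne hne
  rw [G.dist_comm (u := x) (v := z)] at h5
  rw [G.dist_comm (u := m) (v := u), G.dist_comm (u := y) (v := u),
    G.dist_comm (u := y) (v := m)] at h2
  rw [G.dist_comm (u := x) (v := m)] at h1
  refine ⟨m, SimpleGraph.dist_eq_one_iff_adj.1 (by omega),
    SimpleGraph.dist_eq_one_iff_adj.1 (by omega), ?_, by omega⟩
  rintro rfl
  omega

theorem aux_down (hG : IsMedianGraph G) (o : GraphOrientation G) (ho : IsAdmissible G o)
    (v x : V) (hx : x ∈ oFilter o v) :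
    ∀ z, G.Adj x z → G.dist v z + 1 = G.dist v x → z ∈ oFilter o v ∧ o.dir z x := by
  change Relation.ReflTransGen o.dir v x at hx
  induction hx with
  | refl => intro z _ h; simp at h
  | @tail y x hvy hyx ih =>
    intro z hz hd
    have hadj := o.adj_of_dir _ _ hyx
    by_cases hzy : z = y
    · subst hzy; exact ⟨hvy, hyx⟩
    have hd' : G.dist v x = G.dist v y + 1 := by
      rcases aux_bip hG v x y hadj.symm with h | h
      · exact h
      · exact absurd (ih x hadj h.symm).2 (o.asymm _ _ hyx)
    obtain ⟨w, hwz, hwy, hwx, hdw⟩ := aux_quad hG v z y x hz hadj.symm hzy hd hd'.symm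
    obtain ⟨hwF, hwd⟩ := ih w hwy.symm (by omega)
    have e1 := (ho y x z w hadj hz hwz.symm hwy (Ne.symm hzy) (Ne.symm hwx)).1 hyx
    have e2 := (ho w y x z hwy hadj hz hwz.symm hwx (Ne.symm hzy)).1 hwd
    exact ⟨Relation.ReflTransGen.tail hwF e1, e2⟩

theorem aux_int (hG : IsMedianGraph G) (o : GraphOrientation G) (ho : IsAdmissible G o)
    (v w : V) : ∀ n b, G.dist b w = n → b ∈ oFilter o v →
      G.dist v w + G.dist b w = G.dist v b → w ∈ oFilter o v := by
  intro n
  induction n with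
  | zero =>
    intro b h hb _
    rwa [← (hG.1.dist_eq_zero_iff).1 h]
  | succ n ih =>
    intro b h hb hd
    obtain ⟨b', hbb, hb'⟩ := aux_toward hG.1 b w (by rintro rfl; simp at h)
    have ht : G.dist v b' ≤ G.dist v w + G.dist w b' := hG.1.dist_triangle
    rw [G.dist_comm (u := w)] at ht
    have hbp := aux_bip hG v b b' hbb
    have := aux_down hG o ho v b hb b' hbb (by omega)
    exact ih b' (by omega) this.1 (by omega)

theorem aux_step (hG : IsMedianGraph G) (o : GraphOrientation G) (ho : IsAdmissible G o)
    (v b : V) (hb : b ∈ oFilter o v) : ∀ n a, G.dist v a = n → a ∈ oFilter o v →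
      ∀ w, G.Adj a w → G.dist b w + 1 = G.dist b a → w ∈ oFilter o v := by
  intro n
  induction n with
  | zero =>
    intro a h ha w haw hd
    have hva := (hG.1.dist_eq_zero_iff).1 h
    subst hva
    have := SimpleGraph.dist_eq_one_iff_adj.2 haw
    rw [G.dist_comm (u := b) (v := v)] at hd
    exact aux_int hG o ho v w _ b rfl hb (by omega)
  | succ n ih =>
    intro a h ha w haw hd
    rcases o.total _ _ haw with hdir | hdir
    · exact Relation.ReflTransGen.tail ha hdir
    rcases aux_bip hG v a w haw with hvw | hvw
    · exact (aux_down hG o ho v a ha w haw hvw.symm).1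
    obtain ⟨m, ⟨h1, h2, h3⟩, -⟩ := hG.2 a v b
    simp only [gInterval, Set.mem_setOf_eq] at h1 h2 h3
    have haw1 := SimpleGraph.dist_eq_one_iff_adj.2 haw
    by_cases hm : a = m
    · subst hm
      have t : G.dist v b ≤ G.dist v w + G.dist w b := hG.1.dist_triangle
      rw [G.dist_comm (u := w)] at t
      rw [G.dist_comm (u := a) (v := b)] at h2
      exact aux_int hG o ho v w _ b rfl hb (by omega)
    · obtain ⟨a', haa, hd'⟩ := aux_toward hG.1 a m hm
      have t1 : G.dist v a' ≤ G.dist v m + G.dist m a' := hG.1.dist_triangle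
      have t2 : G.dist b a' ≤ G.dist b m + G.dist m a' := hG.1.dist_triangle
      rw [G.dist_comm (u := m) (v := a')] at t1 t2
      rw [G.dist_comm (u := m) (v := v), G.dist_comm (u := a) (v := v)] at h1
      rw [G.dist_comm (u := m) (v := a)] at h3
      have b1 := aux_bip hG v a a' haa
      have b2 := aux_bip hG b a a' haa
      obtain ⟨ha'F, ha'a⟩ := aux_down hG o ho v a ha a' haa (by omega)
      have hne : a' ≠ w := by rintro rfl; omega
      obtain ⟨w', hw1, hw2, hw3, hw4⟩ := aux_quad hG b a' w a haa haw hne (by omega) hd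
      have hwF := ih a' (by omega) ha'F w' hw1.symm hw4
      have b3 := aux_bip hG v w' a' hw1
      have b4 := aux_bip hG v w' w hw2
      have hdd := aux_down hG o ho v w' hwF a' hw1 (by omega)
      have := (ho a' w' w a hw1.symm hw2 haw.symm haa hne hw3).1 hdd.2
      exact absurd hdir (o.asymm _ _ this)

end aux

/-- For any vertex `v` of a directed median graph `(G,o)`, the principal filter
`F_o(v,G)` is convex. -/
theorem oFilter_convex {V : Type} (G : SimpleGraph V) (hG : IsMedianGraph G)
    (o : GraphOrientation G) (ho : IsAdmissible G o) (v : V) :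
    ConvexSet G (oFilter o v) := by
  intro a ha b hb w hw
  simp only [gInterval, Set.mem_setOf_eq] at hw
  generalize hn : G.dist a w = n
  induction n generalizing a with
  | zero => rwa [← (hG.1.dist_eq_zero_iff).1 hn]
  | succ n ih =>
    obtain ⟨a', haa, hd'⟩ := aux_toward hG.1 a w (by rintro rfl; simp at hn)
    have t : G.dist a' b ≤ G.dist a' w + G.dist w b := hG.1.dist_triangle
    have b1 := aux_bip hG b a a' haa
    rw [G.dist_comm (u := b) (v := a), G.dist_comm (u := b) (v := a')] at b1
    have hF := aux_step hG o ho v b hb _ a rfl ha a' haa (by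
      rw [G.dist_comm (u := b) (v := a), G.dist_comm (u := b) (v := a')]; omega)
    exact ih a' hF (by omega) (by omega)
end

section
/- Let φ : G' → G be a square covering of simple graphs with G' a connected median graph. Let ν' be an edge-coloring of G' and o' an orientation of the edges of G' that both factor through φ: there are an edge-coloring ν and an orientation o of G with ν'(e) = ν(φ(e)) for every edge e of G', and φ maps the source of each directed edge of G' to the source of its image under o. Then for any two vertices ũ, ũ' of G' with φ(ũ) = φ(ũ'), there exists a graph automorphism f of G' with f(ũ) = ũ' that preserves the colors and the directions of all edges. Consequently, if G is finite and (G', o') is a directed median graph, then the principal filters F_{o'}(ũ, G'), for ũ a vertex of G', fall into at most |V(G)| classes up to isomorphism of the induced subgraphs preserving edge directions and colors. -/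
/-- A graph covering map: a locally bijective homomorphism of simple graphs. -/
def IsGraphCovering {V' V : Type} (G' : SimpleGraph V') (G : SimpleGraph V)
    (φ : V' → V) : Prop :=
  (∀ u v : V', G'.Adj u v → G.Adj (φ u) (φ v)) ∧
  ∀ v' : V', Set.BijOn φ (G'.neighborSet v') (G.neighborSet (φ v'))

/-- A square covering: a covering map along which 4-cycles of `G` lift to 4-cycles
of `G'`. -/
def IsSquareCovering {V' V : Type} (G' : SimpleGraph V') (G : SimpleGraph V)
    (φ : V' → V) : Prop :=
  IsGraphCovering G' G φ ∧
  ∀ w₀ w₁ w₂ w₃ : V, G.Adj w₀ w₁ → G.Adj w₁ w₂ → G.Adj w₂ w₃ → G.Adj w₃ w₀ →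
    w₀ ≠ w₂ → w₁ ≠ w₃ →
    ∀ v₀' v₁' v₃' : V', φ v₀' = w₀ →
      G'.Adj v₀' v₁' → φ v₁' = w₁ → G'.Adj v₀' v₃' → φ v₃' = w₃ →
      ∃ v₂' : V', G'.Adj v₁' v₂' ∧ G'.Adj v₃' v₂' ∧ φ v₂' = w₂

/-- The principal filters of `u₁` and `u₂` are isomorphic as colored directed
graphs: there is a bijection between them preserving adjacency, edge directions
and edge colors. -/
def FilterIso {V' C : Type} (G' : SimpleGraph V') (o' : GraphOrientation G')
    (ν' : V' → V' → C) (u₁ u₂ : V') : Prop :=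
  ∃ g : V' → V', Set.BijOn g (oFilter o' u₁) (oFilter o' u₂) ∧
    ∀ x ∈ oFilter o' u₁, ∀ y ∈ oFilter o' u₁,
      (G'.Adj x y ↔ G'.Adj (g x) (g y)) ∧
      (o'.dir x y ↔ o'.dir (g x) (g y)) ∧
      (G'.Adj x y → ν' (g x) (g y) = ν' x y)

theorem med_adj_ne {V : Type} {G : SimpleGraph V} (h : IsMedianGraph G) (u a b : V)
    (hab : G.Adj a b) : G.dist u a ≠ G.dist u b := by
  intro e
  obtain ⟨m, ⟨h1, h2, h3⟩, -⟩ := h.2 u a b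
  simp only [gInterval, Set.mem_ofPred_eq] at h1 h2 h3
  have hd : G.dist a b = 1 := SimpleGraph.dist_eq_one_iff_adj.mpr hab
  have c1 : G.dist b m = G.dist m b := SimpleGraph.dist_comm
  have c2 : G.dist m u = G.dist u m := SimpleGraph.dist_comm
  have c3 : G.dist b u = G.dist u b := SimpleGraph.dist_comm
  have c4 : G.dist a m = G.dist m a := SimpleGraph.dist_comm
  omega

theorem med_adj_step {V : Type} {G : SimpleGraph V} (h : IsMedianGraph G) (u a b : V)
    (hab : G.Adj a b) :
    G.dist u b = G.dist u a + 1 ∨ G.dist u a = G.dist u b + 1 := by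
  have := med_adj_ne h u a b hab
  have t1 := h.1.dist_triangle (u := u) (v := a) (w := b)
  have t2 := h.1.dist_triangle (u := u) (v := b) (w := a)
  have hd : G.dist a b = 1 := SimpleGraph.dist_eq_one_iff_adj.mpr hab
  have c1 : G.dist b a = G.dist a b := SimpleGraph.dist_comm
  omega

theorem med_quad {V : Type} {G : SimpleGraph V} (h : IsMedianGraph G) (u a b v : V)
    (hav : G.Adj a v) (hbv : G.Adj b v) (hne : a ≠ b)
    (e1 : G.dist u v = G.dist u a + 1) (e2 : G.dist u v = G.dist u b + 1) :
    ∃ c, G.Adj c a ∧ G.Adj c b ∧ G.dist u a = G.dist u c + 1 ∧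
      G.dist u b = G.dist u c + 1 := by
  have n1 : ¬ G.Adj a b := fun hab => med_adj_ne h u a b hab (by omega)
  have d1 : G.dist a b ≠ 1 := fun e => n1 (SimpleGraph.dist_eq_one_iff_adj.mp e)
  have d0 : G.dist a b ≠ 0 := fun e => hne (h.1.dist_eq_zero_iff.mp e)
  have t1 := h.1.dist_triangle (u := a) (v := v) (w := b)
  have ha : G.dist a v = 1 := SimpleGraph.dist_eq_one_iff_adj.mpr hav
  have hb : G.dist v b = 1 := SimpleGraph.dist_eq_one_iff_adj.mpr hbv.symm
  obtain ⟨m, ⟨h1, h2, h3⟩, -⟩ := h.2 u a b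
  simp only [gInterval, Set.mem_ofPred_eq] at h1 h2 h3
  have c1 : G.dist b m = G.dist m b := SimpleGraph.dist_comm
  have c2 : G.dist m u = G.dist u m := SimpleGraph.dist_comm
  have c3 : G.dist b u = G.dist u b := SimpleGraph.dist_comm
  have c4 : G.dist a m = G.dist m a := SimpleGraph.dist_comm
  exact ⟨m, SimpleGraph.dist_eq_one_iff_adj.mp (by omega),
    SimpleGraph.dist_eq_one_iff_adj.mp (by omega), by omega, by omega⟩

inductive Transp {V' V : Type} (G' : SimpleGraph V') (φ : V' → V) (u₁ u₂ : V') :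
    V' → V' → Prop
  | base : Transp G' φ u₁ u₂ u₁ u₂
  | step (v y v' y' : V') : Transp G' φ u₁ u₂ v y → G'.Adj v v' →
      G'.dist u₁ v' = G'.dist u₁ v + 1 → G'.Adj y y' → φ y' = φ v' →
      Transp G' φ u₁ u₂ v' y'

theorem Transp.proj {V' V : Type} {G' : SimpleGraph V'} {φ : V' → V} {u₁ u₂ : V'}
    (hu : φ u₁ = φ u₂) {v y : V'} (h : Transp G' φ u₁ u₂ v y) : φ y = φ v := by
  cases h with
  | base => exact hu.symm
  | step _ _ _ _ _ _ _ _ e => exact e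

theorem cov_lift {V' V : Type} {G' : SimpleGraph V'} {G : SimpleGraph V} {φ : V' → V}
    (hφ : IsGraphCovering G' G φ) {v y v' : V'} (e : φ y = φ v) (h : G'.Adj v v') :
    ∃ y', G'.Adj y y' ∧ φ y' = φ v' := by
  have : φ v' ∈ G.neighborSet (φ y) := by
    rw [e]; exact hφ.1 _ _ h
  obtain ⟨y', h1, h2⟩ := (hφ.2 y).surjOn this
  exact ⟨y', h1, h2⟩

theorem cov_inj {V' V : Type} {G' : SimpleGraph V'} {G : SimpleGraph V} {φ : V' → V}
    (hφ : IsGraphCovering G' G φ) {v a b : V'} (ha : G'.Adj v a) (hb : G'.Adj v b)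
    (e : φ a = φ b) : a = b :=
  (hφ.2 v).injOn ha hb e

theorem transp_exists {V' V : Type} {G' : SimpleGraph V'} {G : SimpleGraph V} {φ : V' → V}
    (hφ : IsSquareCovering G' G φ) (hmed : IsMedianGraph G') {u₁ u₂ : V'}
    (hu : φ u₁ = φ u₂) (n : ℕ) : ∀ v, G'.dist u₁ v = n → ∃ y, Transp G' φ u₁ u₂ v y := by
  induction n with
  | zero =>
    intro v hv
    have := hmed.1.dist_eq_zero_iff.mp hv
    subst this
    exact ⟨_, .base⟩
  | succ n ih =>
    intro v hv
    obtain ⟨w, hw⟩ := hmed.1.exists_walk_length_eq_dist v u₁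
    have hc : G'.dist v u₁ = G'.dist u₁ v := SimpleGraph.dist_comm
    cases w with
    | nil => simp at hv
    | cons hadj p =>
      rename_i a
      simp only [SimpleGraph.Walk.length_cons] at hw
      have hp := SimpleGraph.dist_le p
      have hc' : G'.dist a u₁ = G'.dist u₁ a := SimpleGraph.dist_comm
      have hs := med_adj_step hmed u₁ _ _ hadj
      obtain ⟨y, hy⟩ := ih a (by omega)
      obtain ⟨y', h1, h2⟩ := cov_lift hφ.1 (hy.proj hu) hadj.symm
      exact ⟨y', .step _ _ _ _ hy hadj.symm (by omega) h1 h2⟩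

theorem transp_unique {V' V : Type} {G' : SimpleGraph V'} {G : SimpleGraph V} {φ : V' → V}
    (hφ : IsSquareCovering G' G φ) (hmed : IsMedianGraph G') {u₁ u₂ : V'}
    (hu : φ u₁ = φ u₂) (n : ℕ) : ∀ v, G'.dist u₁ v = n → ∀ y z, Transp G' φ u₁ u₂ v y →
      Transp G' φ u₁ u₂ v z → y = z := by
  induction n with
  | zero =>
    intro v hv y z hy hz
    cases hy with
    | base =>
      cases hz with
      | base => rfl
      | step => omega
    | step => omega
  | succ n ih =>
    intro v hv y z hy hz
    cases hy with
    | base => simp at hv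
    | step a ya _ _ ta hav ea hya pa =>
    cases hz with
    | base => simp at hv
    | step b yb _ _ tb hbv eb hyb pb =>
    by_cases hab : a = b
    · subst hab
      have := ih a (by omega) _ _ ta tb
      subst this
      exact cov_inj hφ.1 hya hyb (pa.trans pb.symm)
    · obtain ⟨c, hca, hcb, e1, e2⟩ := med_quad hmed u₁ a b v hav hbv hab ea eb
      obtain ⟨yc, tc⟩ := transp_exists hφ hmed hu _ c rfl
      have pc := tc.proj hu
      obtain ⟨ya', g1, g2⟩ := cov_lift hφ.1 pc hca
      obtain ⟨yb', k1, k2⟩ := cov_lift hφ.1 pc hcb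
      have := ih a (by omega) _ _ ta (.step _ _ _ _ tc hca e1 g1 g2)
      subst this
      have := ih b (by omega) _ _ tb (.step _ _ _ _ tc hcb e2 k1 k2)
      subst this
      have A := hφ.1.1
      have ncv : φ c ≠ φ v := fun e => by
        have := cov_inj hφ.1 hca.symm hav e
        subst this
        omega
      have nab : φ a ≠ φ b := fun e => hab (cov_inj hφ.1 hav.symm hbv.symm e)
      obtain ⟨x, x1, x2, x3⟩ := hφ.2 (φ c) (φ a) (φ v) (φ b) (A _ _ hca) (A _ _ hav)
        (A _ _ hbv.symm) (A _ _ hcb.symm) ncv nab yc ya yb pc g1 g2 k1 k2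
      have q1 := cov_inj hφ.1 hya x1 (pa.trans x3.symm)
      have q2 := cov_inj hφ.1 hyb x2 (pb.trans x3.symm)
      exact q1.trans q2.symm

theorem transport {V' V : Type} {G' : SimpleGraph V'} {G : SimpleGraph V} {φ : V' → V}
    (hφ : IsSquareCovering G' G φ) (hmed : IsMedianGraph G') {u₁ u₂ : V'}
    (hu : φ u₁ = φ u₂) : ∃ f : V' → V', f u₁ = u₂ ∧ (∀ x, φ (f x) = φ x) ∧
      ∀ x y, G'.Adj x y → G'.Adj (f x) (f y) := by
  choose f hf using fun v => transp_exists hφ hmed hu _ v rfl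
  have key : ∀ x y, G'.Adj x y → G'.dist u₁ y = G'.dist u₁ x + 1 → G'.Adj (f x) (f y) := by
    intro x y h e
    obtain ⟨y', h1, h2⟩ := cov_lift hφ.1 ((hf x).proj hu) h
    have := transp_unique hφ hmed hu _ y rfl _ _ (hf y) (.step _ _ _ _ (hf x) h e h1 h2)
    rw [this]; exact h1
  refine ⟨f, transp_unique hφ hmed hu _ u₁ rfl _ _ (hf u₁) .base, fun x => (hf x).proj hu, ?_⟩
  intro x y h
  rcases med_adj_step hmed u₁ x y h with e | e
  · exact key x y h e
  · exact (key y x h.symm e).symm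

theorem fix_all {V' V : Type} {G' : SimpleGraph V'} {G : SimpleGraph V} {φ : V' → V}
    (hφ : IsGraphCovering G' G φ) (hc : G'.Connected) {u : V'} {f : V' → V'}
    (h0 : f u = u) (hp : ∀ x, φ (f x) = φ x) (ha : ∀ x y, G'.Adj x y → G'.Adj (f x) (f y))
    (v : V') : f v = v := by
  obtain ⟨w⟩ := hc.preconnected u v
  induction w with
  | nil => exact h0
  | @cons a b c h p ih =>
    apply ih
    have := ha _ _ h
    rw [h0] at this
    exact cov_inj hφ this h (hp _)

theorem auto_exists {V' V C : Type}
    (G' : SimpleGraph V') (G : SimpleGraph V) (φ : V' → V)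
    (hφ : IsSquareCovering G' G φ) (hmed : IsMedianGraph G')
    (o' : GraphOrientation G') (ν' : V' → V' → C)
    (o : GraphOrientation G) (ν : V → V → C)
    (hν : ∀ u v : V', G'.Adj u v → ν' u v = ν (φ u) (φ v))
    (ho : ∀ u v : V', o'.dir u v → o.dir (φ u) (φ v)) (u₁ u₂ : V') (hu : φ u₁ = φ u₂) :
      ∃ f : V' → V', Function.Bijective f ∧ f u₁ = u₂ ∧
        (∀ u v : V', G'.Adj u v ↔ G'.Adj (f u) (f v)) ∧
        (∀ u v : V', o'.dir u v ↔ o'.dir (f u) (f v)) ∧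
        (∀ u v : V', G'.Adj u v → ν' (f u) (f v) = ν' u v) := by
  obtain ⟨f, f0, fp, fa⟩ := transport hφ hmed hu
  obtain ⟨g, g0, gp, ga⟩ := transport hφ hmed hu.symm
  have gf : ∀ x, g (f x) = x := fix_all (f := fun x => g (f x)) hφ.1 hmed.1
    (u := u₁) (by simp only [f0, g0]) (fun x => by rw [gp, fp]) (fun x y h => ga _ _ (fa _ _ h))
  have fg : ∀ x, f (g x) = x := fix_all (f := fun x => f (g x)) hφ.1 hmed.1
    (u := u₂) (by simp only [f0, g0]) (fun x => by rw [fp, gp]) (fun x y h => fa _ _ (ga _ _ h))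
  have adj : ∀ u v : V', G'.Adj u v ↔ G'.Adj (f u) (f v) := fun u v =>
    ⟨fa u v, fun h => by have := ga _ _ h; rwa [gf, gf] at this⟩
  have hd : ∀ u v, o'.dir u v ↔ G'.Adj u v ∧ o.dir (φ u) (φ v) := fun u v =>
    ⟨fun h => ⟨o'.adj_of_dir _ _ h, ho _ _ h⟩, fun ⟨h1, h2⟩ =>
      (o'.total _ _ h1).resolve_right fun h3 => o.asymm _ _ h2 (ho _ _ h3)⟩
  refine ⟨f, ⟨fun x y h => by rw [← gf x, h, gf], fun x => ⟨g x, fg x⟩⟩, f0, adj, ?_, ?_⟩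
  · intro u v
    rw [hd, hd, fp, fp, adj]
  · intro u v h
    rw [hν _ _ h, hν _ _ (fa _ _ h), fp, fp]

/-- Let `φ : G' → G` be a square covering with `G'` a (connected) median graph, and
let the edge coloring `ν'` and the orientation `o'` of `G'` factor through `φ`
(via a coloring `ν` and an orientation `o` of `G`). Then any two vertices of `G'`
with the same image under `φ` are exchanged by an automorphism of `G'` preserving
the colors and directions of all edges. Consequently, if `G` is finite and
`(G', o')` is a directed median graph, the principal filters of `(G', o')` fall
into at most `|V(G)|` classes up to isomorphism preserving directions and colors. -/
theorem covering_filter_regularity {V' V C : Type}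
    (G' : SimpleGraph V') (G : SimpleGraph V) (φ : V' → V)
    (hφ : IsSquareCovering G' G φ) (hmed : IsMedianGraph G')
    (o' : GraphOrientation G') (ν' : V' → V' → C)
    (o : GraphOrientation G) (ν : V → V → C)
    (hν : ∀ u v : V', G'.Adj u v → ν' u v = ν (φ u) (φ v))
    (ho : ∀ u v : V', o'.dir u v → o.dir (φ u) (φ v)) :
    (∀ u₁ u₂ : V', φ u₁ = φ u₂ →
      ∃ f : V' → V', Function.Bijective f ∧ f u₁ = u₂ ∧
        (∀ u v : V', G'.Adj u v ↔ G'.Adj (f u) (f v)) ∧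
        (∀ u v : V', o'.dir u v ↔ o'.dir (f u) (f v)) ∧
        (∀ u v : V', G'.Adj u v → ν' (f u) (f v) = ν' u v)) ∧
    (Finite V → IsAdmissible G' o' →
      ∃ cl : V' → V, ∀ u₁ u₂ : V', cl u₁ = cl u₂ → FilterIso G' o' ν' u₁ u₂) := by
  have main := auto_exists G' G φ hφ hmed o' ν' o ν hν ho
  refine ⟨main, fun _ _ => ⟨φ, fun u₁ u₂ hu => ?_⟩⟩
  obtain ⟨f, fb, f0, fa, fd, fc⟩ := main u₁ u₂ hu
  refine ⟨f, ⟨?_, fb.1.injOn, ?_⟩, fun x _ y _ => ⟨fa x y, fd x y, fc x y⟩⟩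
  · intro x hx
    have : Relation.ReflTransGen o'.dir (f u₁) (f x) :=
      Relation.ReflTransGen.lift f (fun a b h => (fd a b).mp h) _ _ hx
    rwa [f0] at this
  · intro x hx
    have hx' : Relation.ReflTransGen o'.dir u₂ x := hx
    clear hx
    induction hx' with
    | refl => exact ⟨u₁, Relation.ReflTransGen.refl, f0⟩
    | @tail b c _ h ih =>
      obtain ⟨b', hb, rfl⟩ := ih
      obtain ⟨c', rfl⟩ := fb.2 c
      exact ⟨c', Relation.ReflTransGen.tail hb ((fd _ _).mpr h), rfl⟩
end
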